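/- Let a, b, c ∈ ℂ[x₀, x₁, x₂, x₃] be homogeneous polynomials with 2·(deg b) = deg a + deg c, and set F = b² − 4·a·c (so F is homogeneous). Let p ∈ ℂ⁴ be a nonzero point with a(p) = b(p) = c(p) = 0, and suppose that the three gradient vectors ((∂a/∂x_i)(p))_{i}, ((∂b/∂x_i)(p))_{i}, ((∂c/∂x_i)(p))_{i} are linearly independent over ℂ. Then all four first-order partial derivatives of F vanish at p, and the 4×4 Hessian matrix ((∂²F/∂x_i∂x_j)(p))_{0 ≤ i, j ≤ 3} has rank exactly 3; hence the point [p] ∈ ℙ³ is an ordinary double point of the surface {F = 0}. -/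

import Mathlib

open MvPolynomial

theorem rank_aux (G : Matrix (Fin 3) (Fin 4) ℂ) (hG : LinearIndependent ℂ G.row)
    (M : Matrix (Fin 3) (Fin 3) ℂ) (hM : IsUnit M.det) :
    (G.transpose * (M * G)).rank = 3 := by
  have hr : G.rank = 3 := by simpa using hG.rank_matrix
  apply le_antisymm
  · exact (Matrix.rank_mul_le_left _ _).trans (by rw [Matrix.rank_transpose, hr])
  · have hi : Function.Injective G.vecMul := Matrix.vecMul_injective_iff.2 hG
    have hs : Function.Surjective G.mulVec := by
      rw [← Matrix.coe_mulVecLin, ← LinearMap.range_eq_top]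
      apply Submodule.eq_top_of_finrank_eq
      simpa [Matrix.rank] using hr
    obtain ⟨N, hN⟩ := Matrix.mulVec_surjective_iff_exists_right_inverse.1 hs
    have h : N.transpose * (G.transpose * (M * G)) * N = M := by
      have : N.transpose * G.transpose = 1 := by
        rw [← Matrix.transpose_mul, hN, Matrix.transpose_one]
      rw [← Matrix.mul_assoc, this, Matrix.one_mul, Matrix.mul_assoc, hN, Matrix.mul_one]
    have h3 : M.rank = 3 := by
      simpa using Matrix.rank_of_isUnit M ((Matrix.isUnit_iff_isUnit_det M).2 hM)
    rw [← h] at h3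
    refine h3.symm.le.trans ?_
    exact (Matrix.rank_mul_le_left _ _).trans (Matrix.rank_mul_le_right _ _)

/-- If `a`, `b`, `c` are homogeneous polynomials in four variables with
`2 deg b = deg a + deg c`, and `p ≠ 0` is a common zero of `a`, `b`, `c` at which the
three gradients are linearly independent, then all first partials of
`F = b² − 4ac` vanish at `p` and the Hessian of `F` at `p` has rank exactly `3`;
hence `[p] ∈ ℙ³` is an ordinary double point of the surface `{F = 0}`. -/
theorem discriminant_surface_ordinary_double_point
    (a b c : MvPolynomial (Fin 4) ℂ) (da db dc : ℕ)
    (ha : a.IsHomogeneous da) (hb : b.IsHomogeneous db) (hc : c.IsHomogeneous dc)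
    (hdeg : 2 * db = da + dc)
    (p : Fin 4 → ℂ) (hp : p ≠ 0)
    (hap : eval p a = 0) (hbp : eval p b = 0) (hcp : eval p c = 0)
    (hind : LinearIndependent ℂ
      ![fun i => eval p (pderiv i a),
        fun i => eval p (pderiv i b),
        fun i => eval p (pderiv i c)]) :
    (∀ i, eval p (pderiv i (b ^ 2 - 4 * a * c)) = 0) ∧
    (Matrix.of fun i j : Fin 4 =>
        eval p (pderiv i (pderiv j (b ^ 2 - 4 * a * c)))).rank = 3 := by
  have h4 : ∀ i : Fin 4, pderiv i (4 : MvPolynomial (Fin 4) ℂ) = 0 := fun i => by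
    have : (4 : MvPolynomial (Fin 4) ℂ) = C 4  := (map_ofNat C 4).symm
    rw [this, pderiv_C]
  refine ⟨fun i => ?_, ?_⟩
  · simp [pow_two, Derivation.leibniz, hap, hbp, hcp]
  · have key := rank_aux (Matrix.of ![fun i => eval p (pderiv i a),
        fun i => eval p (pderiv i b),
        fun i => eval p (pderiv i c)]) hind !![0, 0, -4; 0, 2, 0; -4, 0, 0] (by
      simp [Matrix.det_fin_three])
    refine Eq.trans (congrArg Matrix.rank ?_) key
    ext i j
    simp [pow_two, Derivation.leibniz, hap, hbp, hcp, h4, Matrix.mul_apply, Fin.sum_univ_three]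
    ring
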